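/- Fix c > 0 and define H : (0,1) → ℝ by H(b) = (e^{bc} − 1)(1 − b + (1/c) log((1 − e^{−c})/(1 − e^{−bc}))). Then H attains its maximum over (0,1) uniquely at the point b*(c) = (1/c) log(1 + (e^c − 1)/e); that is, b*(c) ∈ (0,1) and H(b) < H(b*(c)) for all b ∈ (0,1) with b ≠ b*(c). -/

import Mathlib

open Finset Filter

/-- The number of inversions of a permutation of `Fin n`. -/
def invCount (n : ℕ) (σ : Equiv.Perm (Fin n)) : ℕ :=
  (Finset.univ.filter (fun p : Fin n × Fin n => p.1 < p.2 ∧ σ p.2 < σ p.1)).card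

/-- Normalization constant of the Mallows distribution:
`Z_n(q) = ∑_{σ ∈ S_n} q^{inv σ}`. -/
noncomputable def mallowsZ (n : ℕ) (q : ℝ) : ℝ :=
  ∑ σ : Equiv.Perm (Fin n), q ^ invCount n σ

/-- The Mallows probability of a set `A` of permutations:
`P_n^q(A) = (∑_{σ ∈ A} q^{inv σ}) / Z_n(q)`. -/
noncomputable def mallowsProb (n : ℕ) (q : ℝ) (A : Finset (Equiv.Perm (Fin n))) : ℝ :=
  (∑ σ ∈ A, q ^ invCount n σ) / mallowsZ n q

/-- The success event for the strategy `S(n,M)`.  Positions are indexed by `Fin n`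
(the index `i : Fin n` represents the `(i+1)`-st arriving item) and ranks are the
values of `σ` (the value `n-1`, i.e. the top of `Fin n`, represents the highest
rank `n`).  For `M ≥ 1` the strategy succeeds iff for some position `j` with
`(j:ℕ) ≥ M` (i.e. item number `j+1 ≥ M+1`) the item at position `j` has the top
rank and the maximum rank among the items strictly before position `j` equals the
maximum rank among the first `M` items.  For `M = 0` it succeeds iff the first
item has top rank. -/
def winEvent (n M : ℕ) : Finset (Equiv.Perm (Fin n)) :=
  if M = 0 then
    Finset.univ.filter (fun σ => ∀ i : Fin n, (i : ℕ) = 0 → (σ i : ℕ) = n - 1)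
  else
    Finset.univ.filter (fun σ => ∃ j : Fin n, M ≤ (j : ℕ) ∧ (σ j : ℕ) = n - 1 ∧
      (Finset.univ.filter (fun i : Fin n => i < j)).sup (fun i => (σ i : ℕ)) =
      (Finset.univ.filter (fun i : Fin n => (i : ℕ) < M)).sup (fun i => (σ i : ℕ)))

/-- `𝒫_n^q(S(n,M))`, the success probability of the strategy `S(n,M)` under the
Mallows distribution with parameter `q`. -/
noncomputable def succProb (n M : ℕ) (q : ℝ) : ℝ := mallowsProb n q (winEvent n M)

/-!
Under `q_n = 1 - c / n` the best item contributes one inversion for each item arriving after it, so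
its rescaled arrival time has a limiting density proportional to `exp (c * t)` on `[0, 1]`. Let
`F b = (exp (b * c) - 1) / (exp c - 1)` be the distribution function. Then
`H b = (exp c - 1) / c * (-F b * log (F b))`, with a positive constant in front. The function
`-x * log x` has its strict maximum at `x = exp (-1)`, and `F` is strictly increasing, so `H` is
maximal exactly where `F b = exp (-1)`, which is the point `b*(c)`.
-/

section

open Real

theorem negMulLog_lt_exp_neg_one {x : ℝ} (hx : 0 ≤ x) (hne : x ≠ exp (-1)) :
    negMulLog x < exp (-1) := by
  have hscaled_ne : x * exp 1 ≠ 1 := by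
    rwa [Ne, mul_eq_one_iff_eq_inv₀ (exp_ne_zero 1), ← exp_neg]
  have hscaled := negMulLog_lt_one_sub_self (mul_nonneg hx (exp_nonneg 1)) hscaled_ne
  have hmul : negMulLog (x * exp 1) = exp 1 * negMulLog x - x * exp 1 := by
    rw [negMulLog_mul, negMulLog, negMulLog, log_exp]
    ring
  rw [exp_neg, ← one_div, lt_div_iff₀' (exp_pos 1)]
  linarith

theorem negMulLog_exp_neg_one : negMulLog (exp (-1)) = exp (-1) := by
  rw [negMulLog, log_exp]
  ring

theorem exp_sub_one_ne_zero {x : ℝ} (hx : x ≠ 0) : exp x - 1 ≠ 0 :=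
  sub_ne_zero.2 (exp_eq_one_iff x |>.not.2 hx)

theorem exp_sub_one_div_self_pos {x : ℝ} (hx : x ≠ 0) : 0 < (exp x - 1) / x := by
  rcases hx.lt_or_gt with hneg | hpos
  · exact div_pos_of_neg_of_neg (sub_neg.2 (exp_lt_one_iff.2 hneg)) hneg
  · exact div_pos (sub_pos.2 (one_lt_exp_iff.2 hpos)) hpos

theorem one_sub_exp_neg (x : ℝ) : 1 - exp (-x) = exp (-x) * (exp x - 1) := by
  rw [mul_sub, ← exp_add, neg_add_cancel, exp_zero, mul_one]

/-- The distribution function at `b` of the law on `[0, 1]` with density proportional to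
`exp (c * t)`, which is the limiting rescaled arrival time of the best item. The formula is not
clamped outside `[0, 1]`, and it is only meaningful for `c ≠ 0`. -/
noncomputable def arrivalCDF (c b : ℝ) : ℝ := (exp (b * c) - 1) / (exp c - 1)

/-- The paper's `H(b)`: `(1 - exp (-c)) / (c * exp (-c))` times the limiting success probability of
`S(n, M_n)` with `M_n ∼ b * n`. -/
noncomputable def scaledSuccess (c b : ℝ) : ℝ :=
  (exp (b * c) - 1) * (1 - b + (1 / c) * log ((1 - exp (-c)) / (1 - exp (-(b * c)))))

/-- The paper's `b*(c)`: the limiting fraction of items to observe before selecting. -/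
noncomputable def optimalCutoff (c : ℝ) : ℝ := (1 / c) * log (1 + (exp c - 1) / exp 1)

variable {c : ℝ}

theorem arrivalCDF_zero (c : ℝ) : arrivalCDF c 0 = 0 := by
  simp [arrivalCDF]

theorem arrivalCDF_one (hc : c ≠ 0) : arrivalCDF c 1 = 1 := by
  rw [arrivalCDF, one_mul, div_self (exp_sub_one_ne_zero hc)]

theorem strictMono_arrivalCDF (hc : c ≠ 0) : StrictMono (arrivalCDF c) := by
  intro a b hab
  unfold arrivalCDF
  rcases hc.lt_or_gt with hneg | hpos
  · rw [div_lt_div_right_of_neg (sub_neg.2 (exp_lt_one_iff.2 hneg))]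
    gcongr ?_ - 1
    exact exp_lt_exp.2 (mul_lt_mul_of_neg_right hab hneg)
  · have hden : 0 < exp c - 1 := sub_pos.2 (one_lt_exp_iff.2 hpos)
    gcongr

theorem arrivalCDF_optimalCutoff (hc : c ≠ 0) : arrivalCDF c (optimalCutoff c) = exp (-1) := by
  have harg : 0 < 1 + (exp c - 1) / exp 1 := by
    have hsum : 1 + (exp c - 1) / exp 1 = (exp 1 - 1 + exp c) / exp 1 := by
      field_simp
      ring
    have hexp : 1 < exp 1 := one_lt_exp_iff.2 one_pos
    rw [hsum]
    exact div_pos (add_pos (sub_pos.2 hexp) (exp_pos c)) (exp_pos 1)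
  have hmul : optimalCutoff c * c = log (1 + (exp c - 1) / exp 1) := by
    rw [optimalCutoff, mul_right_comm, one_div_mul_cancel hc, one_mul]
  rw [arrivalCDF, hmul, exp_log harg, add_sub_cancel_left, div_right_comm,
    div_self (exp_sub_one_ne_zero hc), one_div, exp_neg]

theorem optimalCutoff_mem_Ioo (hc : c ≠ 0) : optimalCutoff c ∈ Set.Ioo (0 : ℝ) 1 := by
  constructor
  · rw [← (strictMono_arrivalCDF hc).lt_iff_lt, arrivalCDF_zero, arrivalCDF_optimalCutoff hc]
    exact exp_pos _
  · rw [← (strictMono_arrivalCDF hc).lt_iff_lt, arrivalCDF_one hc, arrivalCDF_optimalCutoff hc]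
    exact exp_lt_one_iff.2 neg_one_lt_zero

theorem log_one_sub_exp_neg_div {b : ℝ} (hc : c ≠ 0) (hb : b ≠ 0) :
    log ((1 - exp (-c)) / (1 - exp (-(b * c)))) = (b - 1) * c - log (arrivalCDF c b) := by
  have hc' := exp_sub_one_ne_zero hc
  have hbc := exp_sub_one_ne_zero (mul_ne_zero hb hc)
  rw [one_sub_exp_neg, one_sub_exp_neg, arrivalCDF,
    log_div (mul_ne_zero (exp_ne_zero _) hc') (mul_ne_zero (exp_ne_zero _) hbc),
    log_mul (exp_ne_zero _) hc', log_mul (exp_ne_zero _) hbc, log_div hbc hc', log_exp, log_exp]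
  ring

theorem scaledSuccess_eq_mul_negMulLog {b : ℝ} (hc : c ≠ 0) (hb : b ≠ 0) :
    scaledSuccess c b = (exp c - 1) / c * negMulLog (arrivalCDF c b) := by
  have hbracket : 1 - b + (1 / c) * log ((1 - exp (-c)) / (1 - exp (-(b * c)))) =
      -log (arrivalCDF c b) / c := by
    rw [log_one_sub_exp_neg_div hc hb]
    field_simp
    ring
  have hnum : exp (b * c) - 1 = (exp c - 1) * arrivalCDF c b :=
    (mul_div_cancel₀ _ (exp_sub_one_ne_zero hc)).symm
  rw [scaledSuccess, hbracket, hnum, negMulLog]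
  ring

theorem scaledSuccess_lt_optimalCutoff {b : ℝ} (hc : c ≠ 0) (hb : 0 < b)
    (hne : b ≠ optimalCutoff c) : scaledSuccess c b < scaledSuccess c (optimalCutoff c) := by
  have hmono := strictMono_arrivalCDF hc
  have hnonneg : 0 ≤ arrivalCDF c b := by
    simpa only [arrivalCDF_zero] using (hmono hb).le
  have hne' : arrivalCDF c b ≠ exp (-1) := by
    rw [← arrivalCDF_optimalCutoff hc]
    exact hmono.injective.ne hne
  rw [scaledSuccess_eq_mul_negMulLog hc hb.ne',
    scaledSuccess_eq_mul_negMulLog hc (optimalCutoff_mem_Ioo hc).1.ne',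
    arrivalCDF_optimalCutoff hc, negMulLog_exp_neg_one]
  exact mul_lt_mul_of_pos_left (negMulLog_lt_exp_neg_one hnonneg hne') (exp_sub_one_div_self_pos hc)

end

theorem stmt_3_general (c : ℝ) (hc : c ≠ 0) :
    let H : ℝ → ℝ := fun b => (Real.exp (b * c) - 1) *
      (1 - b + (1 / c) * Real.log ((1 - Real.exp (-c)) / (1 - Real.exp (-(b * c)))))
    let bstar : ℝ := (1 / c) * Real.log (1 + (Real.exp c - 1) / Real.exp 1)
    bstar ∈ Set.Ioo (0 : ℝ) 1 ∧ ∀ b ∈ Set.Ioi (0 : ℝ), b ≠ bstar → H b < H bstar :=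
  ⟨optimalCutoff_mem_Ioo hc, fun _ hb hne => scaledSuccess_lt_optimalCutoff hc hb hne⟩

theorem stmt_3 (c : ℝ) (hc : 0 < c) :
    let H : ℝ → ℝ := fun b => (Real.exp (b * c) - 1) *
      (1 - b + (1 / c) * Real.log ((1 - Real.exp (-c)) / (1 - Real.exp (-(b * c)))))
    let bstar : ℝ := (1 / c) * Real.log (1 + (Real.exp c - 1) / Real.exp 1)
    bstar ∈ Set.Ioo (0 : ℝ) 1 ∧
      ∀ b ∈ Set.Ioo (0 : ℝ) 1, b ≠ bstar → H b < H bstar :=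
  (stmt_3_general c hc.ne').imp_right fun hmax b hb => hmax b hb.1
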